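/- Assume the finite-state Euler–Maruyama setting with additive noise (σ(x,i) = σ(i) depends only on i ∈ S), the global Lipschitz condition with constant L, condition (H) with parameters c_0 and (β_i), and the averaging condition Σ_i μ_i β_i < 0. Fix p ∈ (0,1) with η_p > 0 and a strictly positive eigenvector ξ^{(p)} of Q_p with Q_p ξ^{(p)} = −η_p ξ^{(p)}, and set ξ̂_0 := max_i ξ^{(p)}_i, ξ̄_0 := (min_i ξ^{(p)}_i)^{−1}, β_0 := max_i |β_i|, q_0 := max_i(−q_ii), and α := p·[β_0 + 4L²(3+4β_0) + 4^{(2+p)/2} β_0 (4^{p/2} L^p + q_0 ξ̂_0 ξ̄_0)]. Then for every stepsize δ ∈ (0,1) with δ < (1/(16L²)) ∧ (η_p/α)^{2/p}, the Euler–Maruyama transition kernel K_δ on ℝⁿ × S admits exactly one invariant probability measure π^δ. -/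

import Mathlib

open MeasureTheory ProbabilityTheory

/-- `Q` has nonnegative off-diagonal entries and every row sums to zero
(a conservative Q-matrix). -/
def IsConservativeQMatrix {N : ℕ} (Q : Matrix (Fin N) (Fin N) ℝ) : Prop :=
  (∀ i j, i ≠ j → 0 ≤ Q i j) ∧ ∀ i, ∑ j, Q i j = 0

/-- Irreducibility: any two distinct states are connected by a finite chain of
transitions with strictly positive rates. -/
def MatrixIrreducible {N : ℕ} (Q : Matrix (Fin N) (Fin N) ℝ) : Prop :=
  ∀ i j : Fin N, i ≠ j → ∃ (k : ℕ) (c : ℕ → Fin N),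
    c 0 = i ∧ c k = j ∧ ∀ l < k, 0 < Q (c l) (c (l + 1))

/-- The set of real parts of the (complex) eigenvalues of a real matrix. -/
def spectrumRe {N : ℕ} (M : Matrix (Fin N) (Fin N) ℝ) : Set ℝ :=
  {x : ℝ | ∃ γ ∈ spectrum ℂ (M.map Complex.ofReal), γ.re = x}

/-- The matrix exponential `exp M = ∑ₖ Mᵏ/k!`. -/
noncomputable def matExp {N : ℕ} (M : Matrix (Fin N) (Fin N) ℝ) :
    Matrix (Fin N) (Fin N) ℝ :=
  ∑' k : ℕ, ((k.factorial : ℝ)⁻¹) • M ^ k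

/-- Standard Gaussian measure on `ℝ^m`. -/
noncomputable def stdGaussianPi (m : ℕ) : Measure (Fin m → ℝ) :=
  Measure.pi fun _ => gaussianReal 0 1

/-- The distribution on `Fin N` with weights given by row `i` of `P`. -/
noncomputable def rowMeasure {N : ℕ} (P : Matrix (Fin N) (Fin N) ℝ) (i : Fin N) :
    Measure (Fin N) :=
  ∑ j : Fin N, ENNReal.ofReal (P i j) • Measure.dirac j

/-- Hilbert–Schmidt norm of a real matrix. -/
noncomputable def hsNorm {n m : ℕ} (M : Matrix (Fin n) (Fin m) ℝ) : ℝ :=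
  Real.sqrt (∑ i, ∑ j, (M i j) ^ 2)

/-- One step of the Euler–Maruyama scheme as a transition kernel on `ℝⁿ × S`:
starting from `(x, i)`, the next state is
`(x + δ b(x,i) + √δ σ(x,i) Z, J)` with `Z` standard Gaussian on `ℝ^m` and
`J` distributed according to row `i` of `exp(δ Q)`, independently. -/
noncomputable def EMKernel {n m N : ℕ} (Q : Matrix (Fin N) (Fin N) ℝ)
    (b : EuclideanSpace ℝ (Fin n) → Fin N → EuclideanSpace ℝ (Fin n))
    (σ : EuclideanSpace ℝ (Fin n) → Fin N → Matrix (Fin n) (Fin m) ℝ)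
    (δ : ℝ) (q : EuclideanSpace ℝ (Fin n) × Fin N) :
    Measure (EuclideanSpace ℝ (Fin n) × Fin N) :=
  Measure.map
    (fun zj : (Fin m → ℝ) × Fin N =>
      (q.1 + δ • b q.1 q.2 +
        Real.sqrt δ • ((WithLp.equiv 2 (Fin n → ℝ)).symm ((σ q.1 q.2).mulVec zj.1)),
        zj.2))
    ((stdGaussianPi m).prod (rowMeasure (matExp (δ • Q)) q.2))

/-- `π` is an invariant measure of the kernel `K`. -/
def IsInvariantMeasure {α : Type*} [MeasurableSpace α] (K : α → Measure α)
    (π : Measure α) : Prop :=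
  ∀ A : Set α, MeasurableSet A → ∫⁻ q, K q A ∂π = π A

section MatExp

open Filter Topology

attribute [local instance] Matrix.linftyOpNormedRing Matrix.linftyOpNormedAlgebra

variable {N : ℕ}

lemma matExp_eq_exp (M : Matrix (Fin N) (Fin N) ℝ) : matExp M = NormedSpace.exp M := by
  rw [NormedSpace.exp_eq_tsum ℝ]
  rfl

lemma hasSum_matExp (M : Matrix (Fin N) (Fin N) ℝ) (i j : Fin N) :
    HasSum (fun k : ℕ => ((k.factorial : ℝ)⁻¹) * (M ^ k) i j) (matExp M i j) := by
  have h : Summable (fun k : ℕ => ((k.factorial : ℝ)⁻¹) • M ^ k) :=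
    NormedSpace.expSeries_summable' (𝕂 := ℝ) M
  have h1 : HasSum (fun k : ℕ => ((k.factorial : ℝ)⁻¹) • M ^ k) (matExp M) := h.hasSum
  have h2 := (Pi.hasSum.1 (Pi.hasSum.1 h1 i)) j
  exact h2

lemma matExp_shift (M : Matrix (Fin N) (Fin N) ℝ) (c : ℝ) (i j : Fin N) :
    matExp M i j = Real.exp (-c) * matExp (M + c • (1 : Matrix (Fin N) (Fin N) ℝ)) i j := by
  have h1 : M = (-c) • (1 : Matrix (Fin N) (Fin N) ℝ)
      + (M + c • (1 : Matrix (Fin N) (Fin N) ℝ)) := by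
    rw [neg_smul]; abel
  have hcomm : Commute ((-c) • (1 : Matrix (Fin N) (Fin N) ℝ))
      (M + c • (1 : Matrix (Fin N) (Fin N) ℝ)) := (Commute.one_left _).smul_left _
  have h2 : NormedSpace.exp M = NormedSpace.exp ((-c) • (1 : Matrix (Fin N) (Fin N) ℝ))
      * NormedSpace.exp (M + c • (1 : Matrix (Fin N) (Fin N) ℝ)) := by
    conv_lhs => rw [h1]
    exact Matrix.exp_add_of_commute _ _ hcomm
  have h3 : NormedSpace.exp ((-c) • (1 : Matrix (Fin N) (Fin N) ℝ))
      = Matrix.diagonal (fun _ => Real.exp (-c)) := by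
    rw [← Matrix.diagonal_one, ← Matrix.diagonal_smul, Matrix.exp_diagonal]
    congr 1
    funext k
    rw [Pi.coe_exp]
    simp [Real.exp_eq_exp_ℝ]
  rw [matExp_eq_exp, matExp_eq_exp, h2, h3, Matrix.diagonal_mul]

lemma pow_entry_nonneg (A : Matrix (Fin N) (Fin N) ℝ) (hA : ∀ i j, 0 ≤ A i j) (k : ℕ) (i j : Fin N) :
    0 ≤ (A ^ k) i j := by
  induction k generalizing i j with
  | zero =>
    rw [pow_zero, Matrix.one_apply]
    split_ifs <;> norm_num
  | succ k ih =>
    rw [pow_succ, Matrix.mul_apply]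
    exact Finset.sum_nonneg fun l _ => mul_nonneg (ih i l) (hA l j)

lemma matExp_ge (A : Matrix (Fin N) (Fin N) ℝ) (hA : ∀ i j, 0 ≤ A i j) (k : ℕ) (i j : Fin N) :
    ((k.factorial : ℝ)⁻¹) * (A ^ k) i j ≤ matExp A i j :=
  le_hasSum (hasSum_matExp A i j) k fun l _ =>
    mul_nonneg (by positivity) (pow_entry_nonneg A hA l i j)

lemma path_pos (A : Matrix (Fin N) (Fin N) ℝ) (hA : ∀ i j, 0 ≤ A i j) (c : ℕ → Fin N) (k : ℕ)
    (h : ∀ l < k, 0 < A (c l) (c (l + 1))) : 0 < (A ^ k) (c 0) (c k) := by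
  induction k with
  | zero => simp
  | succ k ih =>
    rw [pow_succ, Matrix.mul_apply]
    refine Finset.sum_pos' (fun l _ => mul_nonneg (pow_entry_nonneg A hA k _ _) (hA _ _)) ?_
    exact ⟨c k, Finset.mem_univ _, mul_pos (ih fun l hl => h l (by omega)) (h k (by omega))⟩

/-- The shifted nonnegative matrix. -/
lemma shift_nonneg {Q : Matrix (Fin N) (Fin N) ℝ} (hQ : IsConservativeQMatrix Q) {q₀ : ℝ}
    (hq : ∀ i, -Q i i ≤ q₀) {t : ℝ} (ht : 0 ≤ t) (i j : Fin N) :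
    0 ≤ (t • Q + (t * q₀) • (1 : Matrix (Fin N) (Fin N) ℝ)) i j := by
  rw [Matrix.add_apply, Matrix.smul_apply, Matrix.smul_apply, Matrix.one_apply]
  by_cases hij : i = j
  · subst hij
    simp only [if_true, smul_eq_mul, mul_one]
    have := mul_le_mul_of_nonneg_left (hq i) ht
    linarith
  · simp only [hij, if_false, smul_eq_mul, mul_zero, add_zero]
    exact mul_nonneg ht (hQ.1 i j hij)

lemma matExp_nonneg {Q : Matrix (Fin N) (Fin N) ℝ} (hQ : IsConservativeQMatrix Q) {q₀ : ℝ}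
    (hq : ∀ i, -Q i i ≤ q₀) {t : ℝ} (ht : 0 ≤ t) (i j : Fin N) : 0 ≤ matExp (t • Q) i j := by
  rw [matExp_shift _ (t * q₀)]
  refine mul_nonneg (Real.exp_pos _).le ?_
  refine le_trans ?_ (matExp_ge _ (shift_nonneg hQ hq ht) 0 i j)
  exact mul_nonneg (by positivity) (pow_entry_nonneg _ (shift_nonneg hQ hq ht) 0 i j)

lemma matExp_diag_ge {Q : Matrix (Fin N) (Fin N) ℝ} (hQ : IsConservativeQMatrix Q) {q₀ : ℝ}
    (hq : ∀ i, -Q i i ≤ q₀) {t : ℝ} (ht : 0 ≤ t) (i : Fin N) :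
    1 - q₀ * t ≤ matExp (t • Q) i i := by
  rw [matExp_shift _ (t * q₀)]
  have h1 := matExp_ge _ (shift_nonneg hQ hq ht) 0 i i
  simp only [Nat.factorial_zero, Nat.cast_one, inv_one, pow_zero, Matrix.one_apply_eq, mul_one] at h1
  have h2 := Real.add_one_le_exp (-(t * q₀))
  have h3 := mul_le_mul_of_nonneg_left h1 (Real.exp_pos (-(t * q₀))).le
  linarith

lemma matExp_pos {Q : Matrix (Fin N) (Fin N) ℝ} (hQ : IsConservativeQMatrix Q)
    (hirr : MatrixIrreducible Q) {q₀ : ℝ}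
    (hq : ∀ i, -Q i i ≤ q₀) {t : ℝ} (ht : 0 < t) (i j : Fin N) : 0 < matExp (t • Q) i j := by
  obtain ⟨k, c, h0, hk, hc⟩ : ∃ (k : ℕ) (c : ℕ → Fin N), c 0 = i ∧ c k = j ∧
      ∀ l < k, 0 < (t • Q + (t * q₀) • (1 : Matrix (Fin N) (Fin N) ℝ)) (c l) (c (l + 1)) := by
    by_cases hij : i = j
    · exact ⟨0, fun _ => i, rfl, hij, fun l hl => absurd hl (by omega)⟩
    · obtain ⟨k, c, h0, hk, hc⟩ := hirr i j hij
      -- pass to the shifted matrix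
      refine ⟨k, c, h0, hk, fun l hl => ?_⟩
      have hpos := hc l hl
      by_cases he : c l = c (l + 1)
      · exfalso
        rw [← he] at hpos
        have hsum := hQ.2 (c l)
        rw [← Finset.add_sum_erase _ _ (Finset.mem_univ (c l))] at hsum
        have : 0 ≤ ∑ x ∈ Finset.univ.erase (c l), Q (c l) x :=
          Finset.sum_nonneg fun x hx => hQ.1 _ _ (Finset.ne_of_mem_erase hx).symm
        linarith
      · rw [Matrix.add_apply, Matrix.smul_apply, Matrix.smul_apply, Matrix.one_apply_ne he]
        simpa using mul_pos ht hpos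
  rw [matExp_shift _ (t * q₀)]
  refine mul_pos (Real.exp_pos _) ?_
  refine lt_of_lt_of_le ?_ (matExp_ge _ (shift_nonneg hQ hq ht.le) k i j)
  have := path_pos _ (shift_nonneg hQ hq ht.le) c k hc
  rw [h0, hk] at this
  positivity

lemma matExp_rowsum (M : Matrix (Fin N) (Fin N) ℝ) (hM : ∀ i, ∑ j, M i j = 0) (i : Fin N) :
    ∑ j, matExp M i j = 1 := by
  have h1 : HasSum (fun k : ℕ => ∑ j, ((k.factorial : ℝ)⁻¹) * (M ^ k) i j) (∑ j, matExp M i j) :=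
    hasSum_sum fun j _ => hasSum_matExp M i j
  have h2 : HasSum (fun k : ℕ => ∑ j, ((k.factorial : ℝ)⁻¹) * (M ^ k) i j)
      (∑ j, (((0:ℕ).factorial : ℝ)⁻¹) * (M ^ 0) i j) := by
    refine hasSum_single 0 fun k hk => ?_
    obtain ⟨l, rfl⟩ := Nat.exists_eq_succ_of_ne_zero hk
    rw [← Finset.mul_sum]
    have : ∑ j, (M ^ (l + 1)) i j = 0 := by
      simp_rw [pow_succ, Matrix.mul_apply]
      rw [Finset.sum_comm]
      simp_rw [← Finset.mul_sum, hM, mul_zero]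
      simp
    rw [Nat.succ_eq_add_one, this, mul_zero]
  rw [h1.unique h2]
  simp [Matrix.one_apply]

lemma matExp_stat (M : Matrix (Fin N) (Fin N) ℝ) (μ : Fin N → ℝ)
    (hM : ∀ j, ∑ i, μ i * M i j = 0) (j : Fin N) :
    ∑ i, μ i * matExp M i j = μ j := by
  have h1 : HasSum (fun k : ℕ => ∑ i, μ i * (((k.factorial : ℝ)⁻¹) * (M ^ k) i j))
      (∑ i, μ i * matExp M i j) :=
    hasSum_sum fun i _ => (hasSum_matExp M i j).mul_left _
  have h2 : HasSum (fun k : ℕ => ∑ i, μ i * (((k.factorial : ℝ)⁻¹) * (M ^ k) i j))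
      (∑ i, μ i * ((((0:ℕ).factorial : ℝ)⁻¹) * (M ^ 0) i j)) := by
    refine hasSum_single 0 fun k hk => ?_
    obtain ⟨l, rfl⟩ := Nat.exists_eq_succ_of_ne_zero hk
    have h3 : ∀ i, μ i * ((((l + 1).factorial : ℝ)⁻¹) * (M ^ (l + 1)) i j)
        = (((l + 1).factorial : ℝ)⁻¹) * ∑ k, μ i * M i k * (M ^ l) k j := by
      intro i
      rw [pow_succ', Matrix.mul_apply]
      simp_rw [mul_assoc]
      rw [← Finset.mul_sum]
      ring
    rw [Nat.succ_eq_add_one]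
    simp_rw [h3]
    rw [← Finset.mul_sum, Finset.sum_comm]
    simp_rw [← Finset.sum_mul, hM, zero_mul]
    simp
  rw [h1.unique h2]
  simp [Matrix.one_apply]

lemma matExp_hasDerivAt (Q : Matrix (Fin N) (Fin N) ℝ) (t : ℝ) (i j : Fin N) :
    HasDerivAt (fun s : ℝ => matExp (s • Q) i j) ((matExp (t • Q) * Q) i j) t := by
  have h := hasDerivAt_exp_smul_const (𝕂 := ℝ) Q t
  simp_rw [matExp_eq_exp]
  exact hasDerivAt_pi.1 (hasDerivAt_pi.1 h i) j

/-- The key weighted contraction estimate. -/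
lemma matExp_weighted {Q : Matrix (Fin N) (Fin N) ℝ} (hQ : IsConservativeQMatrix Q) {q₀ : ℝ}
    (hq : ∀ i, -Q i i ≤ q₀) (hq0 : 0 ≤ q₀) (β : Fin N → ℝ) (β₀ : ℝ) (hβ : ∀ i, |β i| ≤ β₀)
    (p : ℝ) (hp : 0 < p) (ηp : ℝ) (ξ : Fin N → ℝ)
    (hξeig : (Q + (p / 2) • Matrix.diagonal β).mulVec ξ = (-ηp) • ξ)
    (ξhat ξbar : ℝ) (hbar : 0 < ξbar) (hhi : ∀ i, ξ i ≤ ξhat) (hlo : ∀ i, ξbar⁻¹ ≤ ξ i)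
    (δ : ℝ) (hδ : 0 ≤ δ) (i : Fin N) :
    Real.exp (p / 2 * β i * δ) * ∑ j, matExp (δ • Q) i j * ξ j
      ≤ Real.exp (-ηp * δ + p * β₀ * q₀ * ξhat * ξbar * δ ^ 2 / 2) * ξ i := by
  set c : ℝ := p * β₀ * q₀ * ξhat * ξbar with hc
  clear_value c
  have hξ0 : ∀ i, 0 < ξ i := fun i => (inv_pos.2 hbar).trans_le (hlo i)
  have hhat : 0 < ξhat := (hξ0 i).trans_le (hhi i)
  have hβ0 : 0 ≤ β₀ := (abs_nonneg _).trans (hβ i)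
  have hQξ : ∀ k, ∑ j, Q k j * ξ j = (-ηp - p / 2 * β k) * ξ k := by
    intro k
    have h := congrFun hξeig k
    rw [Matrix.add_mulVec, Pi.add_apply, Matrix.smul_mulVec, Pi.smul_apply,
      Matrix.mulVec_diagonal, Pi.smul_apply, smul_eq_mul, smul_eq_mul, Matrix.mulVec, dotProduct] at h
    linarith
  set w : ℝ → ℝ := fun t => Real.exp (p / 2 * β i * t + ηp * t - c * t ^ 2 / 2)
    * ∑ j, matExp (t • Q) i j * ξ j with hw
  have hder : ∀ t, HasDerivAt w (Real.exp (p / 2 * β i * t + ηp * t - c * t ^ 2 / 2) *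
      ∑ k, matExp (t • Q) i k * ξ k * (p / 2 * (β i - β k) - c * t)) t := by
    intro t
    have h1 : HasDerivAt (fun t : ℝ => p / 2 * β i * t + ηp * t - c * t ^ 2 / 2)
        (p / 2 * β i + ηp - c * t) t := by
      have := (((hasDerivAt_id t).const_mul (p / 2 * β i)).add ((hasDerivAt_id t).const_mul ηp)).sub
        (((hasDerivAt_pow 2 t).const_mul c).div_const 2)
      refine this.congr_deriv ?_
      norm_num
      ring
    have h2 : HasDerivAt (fun t : ℝ => ∑ j, matExp (t • Q) i j * ξ j)
        (∑ j, (matExp (t • Q) * Q) i j * ξ j) t :=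
      HasDerivAt.fun_sum fun j _ => (matExp_hasDerivAt Q t i j).mul_const (ξ j)
    have h3 : ∑ j, (matExp (t • Q) * Q) i j * ξ j
        = ∑ k, matExp (t • Q) i k * ((-ηp - p / 2 * β k) * ξ k) := by
      simp_rw [Matrix.mul_apply, Finset.sum_mul]
      rw [Finset.sum_comm]
      refine Finset.sum_congr rfl fun k _ => ?_
      rw [← hQξ k, Finset.mul_sum]
      exact Finset.sum_congr rfl fun j _ => by ring
    rw [h3] at h2
    refine (h1.exp.mul h2).congr_deriv ?_
    rw [mul_assoc, ← mul_add, Finset.mul_sum, ← Finset.sum_add_distrib]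
    congr 1
    exact Finset.sum_congr rfl fun k _ => by ring
  have hanti : AntitoneOn w (Set.Icc 0 δ) := by
    refine antitoneOn_of_deriv_nonpos (convex_Icc 0 δ)
      (fun t _ => (hder t).continuousAt.continuousWithinAt)
      (fun t _ => (hder t).differentiableAt.differentiableWithinAt) ?_
    intro t ht
    rw [interior_Icc] at ht
    rw [(hder t).deriv]
    refine mul_nonpos_of_nonneg_of_nonpos (Real.exp_pos _).le ?_
    have ht0 := ht.1.le
    have hP := fun k => matExp_nonneg hQ hq ht0 i k
    have hrow : ∑ j, matExp (t • Q) i j = 1 := by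
      refine matExp_rowsum _ (fun i => ?_) i
      simp only [Matrix.smul_apply, smul_eq_mul]
      rw [← Finset.mul_sum, hQ.2, mul_zero]
    have hdiag := matExp_diag_ge hQ hq ht0 i
    have hb : ∀ k, matExp (t • Q) i k * ξ k * (p / 2 * (β i - β k) - c * t)
        ≤ (if k = i then 0 else matExp (t • Q) i k * (ξhat * (p * β₀)))
          - matExp (t • Q) i k * (ξbar⁻¹ * (c * t)) := by
      intro k
      have hct : 0 ≤ c * t := by rw [hc]; positivity
      have e1 : matExp (t • Q) i k * (ξbar⁻¹ * (c * t)) ≤ matExp (t • Q) i k * ξ k * (c * t) := by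
        rw [mul_assoc (matExp (t • Q) i k) (ξ k)]
        exact mul_le_mul_of_nonneg_left (mul_le_mul_of_nonneg_right (hlo k) hct) (hP k)
      by_cases hk : k = i
      · subst hk
        simp only [if_true, sub_self, mul_zero, zero_sub, mul_neg]
        linarith
      · simp only [hk, if_false]
        have e2 : matExp (t • Q) i k * ξ k * (p / 2 * (β i - β k))
            ≤ matExp (t • Q) i k * (ξhat * (p * β₀)) := by
          rw [mul_assoc]
          refine mul_le_mul_of_nonneg_left ?_ (hP k)
          have e3 : p / 2 * (β i - β k) ≤ p * β₀ := by
            have := (abs_le.1 (hβ i)).2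
            have := (abs_le.1 (hβ k)).1
            nlinarith
          calc ξ k * (p / 2 * (β i - β k)) ≤ ξ k * (p * β₀) :=
                mul_le_mul_of_nonneg_left e3 (hξ0 k).le
            _ ≤ _ := mul_le_mul_of_nonneg_right (hhi k) (by positivity)
        linarith
    refine (Finset.sum_le_sum fun k _ => hb k).trans ?_
    rw [Finset.sum_sub_distrib, ← Finset.sum_mul, hrow, one_mul]
    have e4 : ∑ k, (if k = i then 0 else matExp (t • Q) i k * (ξhat * (p * β₀)))
        = (1 - matExp (t • Q) i i) * (ξhat * (p * β₀)) := by
      rw [← hrow, ← Finset.add_sum_erase _ _ (Finset.mem_univ i), if_pos rfl, zero_add,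
        ← Finset.add_sum_erase Finset.univ (fun j => matExp (t • Q) i j) (Finset.mem_univ i),
        add_sub_cancel_left, Finset.sum_mul]
      exact Finset.sum_congr rfl fun k hk => by rw [if_neg (Finset.ne_of_mem_erase hk)]
    rw [e4]
    have e5 : ξbar⁻¹ * (c * t) = q₀ * t * (ξhat * (p * β₀)) := by
      rw [hc]; field_simp
    rw [e5, ← sub_mul]
    exact mul_nonpos_of_nonpos_of_nonneg (by linarith) (by positivity)
  have hfin := hanti (Set.left_mem_Icc.2 hδ) (Set.right_mem_Icc.2 hδ) hδ
  have hw0 : w 0 = ξ i := by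
    have h0 : matExp ((0:ℝ) • Q) = 1 := by
      rw [matExp_eq_exp, zero_smul, NormedSpace.exp_zero]
    simp only [hw, h0]
    simp [Matrix.one_apply]
  rw [hw0] at hfin
  have h5 := mul_le_mul_of_nonneg_left hfin
    (Real.exp_pos (-ηp * δ + c * δ ^ 2 / 2)).le
  refine le_trans (le_of_eq ?_) h5
  simp only [hw]
  rw [← mul_assoc, ← Real.exp_add]
  congr 2
  ring

end MatExp

open Filter Topology in
/-- Functions bounded by `B` which are `p`-Hölder on fibers with weights `C * ξ i`. -/
def FibHolder {n N : ℕ} (ξ : Fin N → ℝ) (p C B : ℝ)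
    (f : EuclideanSpace ℝ (Fin n) × Fin N → ℝ) : Prop :=
  (∀ q, |f q| ≤ B) ∧ ∀ i x y, |f (x, i) - f (y, i)| ≤ C * ξ i * ‖x - y‖ ^ p

section Abstract

open Filter Topology

variable {n N : ℕ}

lemma FibHolder.continuous {ξ : Fin N → ℝ} {p C B : ℝ} (hp : 0 < p)
    {f : EuclideanSpace ℝ (Fin n) × Fin N → ℝ} (hf : FibHolder ξ p C B f) : Continuous f := by
  rw [continuous_prod_of_discrete_right]
  intro i
  rw [continuous_iff_continuousAt]
  intro x
  rw [ContinuousAt, tendsto_iff_norm_sub_tendsto_zero]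
  have h1 : Tendsto (fun y : EuclideanSpace ℝ (Fin n) => C * ξ i * ‖y - x‖ ^ p) (𝓝 x) (𝓝 0) := by
    have hc : Continuous (fun y : EuclideanSpace ℝ (Fin n) => C * ξ i * ‖y - x‖ ^ p) := by
      refine continuous_const.mul ?_
      exact (Continuous.rpow_const (by fun_prop) (fun _ => Or.inr hp.le))
    have := hc.tendsto x
    simpa [Real.zero_rpow hp.ne'] using this
  refine squeeze_zero (fun _ => norm_nonneg _) (fun y => ?_) h1
  exact hf.2 i y x

lemma FibHolder.integrable {ξ : Fin N → ℝ} {p C B : ℝ} (hp : 0 < p)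
    {f : EuclideanSpace ℝ (Fin n) × Fin N → ℝ} (hf : FibHolder ξ p C B f)
    (m : Measure (EuclideanSpace ℝ (Fin n) × Fin N)) [IsFiniteMeasure m] : Integrable f m :=
  Integrable.of_bound (hf.continuous hp).measurable.aestronglyMeasurable B
    (Eventually.of_forall fun q => hf.1 q)

lemma fibHolder_of_lipschitz {ξ : Fin N → ℝ} (hξ : ∀ i, 0 < ξ i) {p : ℝ} (hp : 0 < p) (hp1 : p < 1)
    (j : Fin N) (g : EuclideanSpace ℝ (Fin n) → ℝ) (hg0 : ∀ x, 0 ≤ g x) (hg1 : ∀ x, g x ≤ 1)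
    (K : ℝ) (hK : 0 ≤ K) (hg : ∀ x y, |g x - g y| ≤ K * ‖x - y‖) :
    ∃ C, 0 ≤ C ∧ FibHolder ξ p C 1 (fun q => if q.2 = j then g q.1 else 0) := by
  refine ⟨K ^ p / ξ j, by have := hξ j; positivity, ?_, ?_⟩
  · intro q
    dsimp only
    split_ifs
    · rw [abs_of_nonneg (hg0 _)]; exact hg1 _
    · simp
  · intro i x y
    by_cases hij : i = j
    · subst hij
      simp only [if_true]
      have e : K ^ p / ξ i * ξ i * ‖x - y‖ ^ p = (K * ‖x - y‖) ^ p := by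
        rw [div_mul_cancel₀ _ (hξ i).ne', Real.mul_rpow hK (norm_nonneg _)]
      rw [e]
      have h1 : |g x - g y| ≤ 1 := by
        rw [abs_le]; constructor <;> linarith [hg0 x, hg0 y, hg1 x, hg1 y]
      calc |g x - g y| = |g x - g y| ^ (1:ℝ) := (Real.rpow_one _).symm
        _ ≤ |g x - g y| ^ p := by
            rcases (abs_nonneg (g x - g y)).eq_or_lt with h | h
            · rw [← h, Real.zero_rpow hp.ne', Real.zero_rpow one_ne_zero]
            · exact Real.rpow_le_rpow_of_exponent_ge h h1 hp1.le
        _ ≤ _ := Real.rpow_le_rpow (abs_nonneg _) (hg x y) hp.le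
    · simp only [hij, if_false, sub_zero, abs_zero]
      have := hξ i
      have := hξ j
      positivity

lemma measure_ext_fibHolder {ξ : Fin N → ℝ} (hξ : ∀ i, 0 < ξ i) {p : ℝ} (hp : 0 < p) (hp1 : p < 1)
    (m₁ m₂ : Measure (EuclideanSpace ℝ (Fin n) × Fin N)) [IsFiniteMeasure m₁] [IsFiniteMeasure m₂]
    (h : ∀ f C, 0 ≤ C → FibHolder ξ p C 1 f → ∫ q, f q ∂m₁ = ∫ q, f q ∂m₂) : m₁ = m₂ := by
  classical
  have hmS : ∀ j : Fin N, MeasurableSet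
      ((Prod.snd : EuclideanSpace ℝ (Fin n) × Fin N → Fin N) ⁻¹' {j}) :=
    fun j => measurable_snd (measurableSet_singleton j)
  -- the fiber measures agree
  have key : ∀ j : Fin N, (m₁.restrict (Prod.snd ⁻¹' {j})).map Prod.fst
      = (m₂.restrict (Prod.snd ⁻¹' {j})).map Prod.fst := by
    intro j
    have hcl : ∀ F : Set (EuclideanSpace ℝ (Fin n)), IsClosed F →
        (m₁.restrict (Prod.snd ⁻¹' {j})).map Prod.fst F
        = (m₂.restrict (Prod.snd ⁻¹' {j})).map Prod.fst F := by
      intro F hF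
      have hpos : ∀ k : ℕ, (0:ℝ) < 1 / ((k:ℝ) + 1) := fun k => by positivity
      have t1 := tendsto_lintegral_thickenedIndicator_of_isClosed
        ((m₁.restrict (Prod.snd ⁻¹' {j})).map Prod.fst) hF hpos tendsto_one_div_add_atTop_nhds_zero_nat
      have t2 := tendsto_lintegral_thickenedIndicator_of_isClosed
        ((m₂.restrict (Prod.snd ⁻¹' {j})).map Prod.fst) hF hpos tendsto_one_div_add_atTop_nhds_zero_nat
      refine tendsto_nhds_unique t1 ?_
      refine t2.congr fun k => ?_
      set g : EuclideanSpace ℝ (Fin n) → NNReal := ⇑(thickenedIndicator (hpos k) F) with hg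
      have hgm : Measurable g := (thickenedIndicator (hpos k) F).continuous.measurable
      have hlip := lipschitzWith_thickenedIndicator (hpos k) F
      obtain ⟨C, hC, hfC⟩ := fibHolder_of_lipschitz hξ hp hp1 j (fun x => (g x : ℝ))
        (fun x => (g x).2) (fun x => NNReal.coe_le_one.2 (thickenedIndicator_le_one (hpos k) F x))
        _ (NNReal.coe_nonneg _) (fun x y => by
          have := hlip.dist_le_mul x y
          rwa [dist_eq_norm x y, NNReal.dist_eq] at this)
      have conv : ∀ m : Measure (EuclideanSpace ℝ (Fin n) × Fin N), IsFiniteMeasure m →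
          ∫⁻ x, (g x : ENNReal) ∂((m.restrict (Prod.snd ⁻¹' {j})).map Prod.fst)
          = ENNReal.ofReal (∫ q, (if q.2 = j then (g q.1 : ℝ) else 0) ∂m) := by
        intro m _
        rw [lintegral_map (by fun_prop) measurable_fst, ← lintegral_indicator (hmS j),
          ofReal_integral_eq_lintegral_ofReal (hfC.integrable hp m)]
        · refine lintegral_congr fun q => ?_
          by_cases hq : q.2 = j
          · simp [hq, Set.indicator]
          · simp [hq, Set.indicator]
        · refine Eventually.of_forall fun q => ?_
          dsimp only [Pi.zero_apply]
          split_ifs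
          · exact (g q.1).2
          · exact le_rfl
      rw [conv m₂ inferInstance, conv m₁ inferInstance, h _ C hC hfC]
    refine ext_of_generate_finite _ ?_ isPiSystem_isClosed (fun F hF => hcl F hF) (hcl _ isClosed_univ)
    rw [BorelSpace.measurable_eq (α := EuclideanSpace ℝ (Fin n)), borel_eq_generateFrom_isClosed]
  ext A hA
  have dec : ∀ m : Measure (EuclideanSpace ℝ (Fin n) × Fin N), m A =
      ∑ j : Fin N, (m.restrict (Prod.snd ⁻¹' {j})).map Prod.fst ((fun x => (x, j)) ⁻¹' A) := by
    intro m
    have h1 : A = ⋃ j ∈ (Finset.univ : Finset (Fin N)), (A ∩ Prod.snd ⁻¹' {j}) := by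
      ext q; simp
    conv_lhs => rw [h1]
    rw [measure_biUnion_finset]
    · refine Finset.sum_congr rfl fun j _ => ?_
      rw [Measure.map_apply measurable_fst (measurable_prodMk_right hA),
        Measure.restrict_apply (measurable_fst (measurable_prodMk_right hA))]
      congr 1
      ext ⟨x, i⟩
      simp only [Set.mem_inter_iff, Set.mem_preimage, Set.mem_singleton_iff]
      constructor
      · rintro ⟨a, rfl⟩; exact ⟨a, rfl⟩
      · rintro ⟨a, rfl⟩; exact ⟨a, rfl⟩
    · intro i _ j _ hij
      refine Set.disjoint_left.2 ?_
      rintro q ⟨_, h1⟩ ⟨_, h2⟩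
      exact hij (by simp only [Set.mem_preimage, Set.mem_singleton_iff] at h1 h2; rw [← h1, h2])
    · intro j _
      exact hA.inter (hmS j)
  rw [dec m₁, dec m₂]
  exact Finset.sum_congr rfl fun j _ => by rw [key j]

end Abstract
section Abstract2

open Filter Topology

variable {n N : ℕ}

lemma stat_unique (P : Matrix (Fin N) (Fin N) ℝ) (hpos : ∀ i j, 0 < P i j)
    (μ ν : Fin N → ℝ) (hμpos : ∀ i, 0 < μ i) (hμ1 : ∑ i, μ i = 1) (hν1 : ∑ i, ν i = 1)
    (hμP : ∀ j, ∑ i, μ i * P i j = μ j) (hνP : ∀ j, ∑ i, ν i * P i j = ν j) : ν = μ := by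
  have hne : Nonempty (Fin N) := by
    by_contra hcon
    rw [not_nonempty_iff] at hcon
    simp at hμ1
  obtain ⟨i₀, hi₀⟩ := Finite.exists_min (fun i => ν i / μ i)
  set t := ν i₀ / μ i₀ with ht
  have hge : ∀ i, 0 ≤ ν i - t * μ i := by
    intro i
    have := hi₀ i
    rw [le_div_iff₀ (hμpos i)] at this
    linarith
  have h0 : ∑ i, (ν i - t * μ i) * P i i₀ = 0 := by
    have : ∑ i, (ν i - t * μ i) * P i i₀ = ∑ i, ν i * P i i₀ - t * ∑ i, μ i * P i i₀ := by
      rw [Finset.mul_sum, ← Finset.sum_sub_distrib]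
      exact Finset.sum_congr rfl fun i _ => by ring
    rw [this, hμP, hνP, ht, div_mul_cancel₀ _ (hμpos i₀).ne', sub_self]
  rw [Finset.sum_eq_zero_iff_of_nonneg (fun i _ => mul_nonneg (hge i) (hpos i i₀).le)] at h0
  have h1 : ∀ i, ν i = t * μ i := by
    intro i
    have := h0 i (Finset.mem_univ i)
    rcases mul_eq_zero.1 this with h | h
    · linarith
    · exact absurd h (hpos i i₀).ne'
  have ht1 : t = 1 := by
    have : ∑ i, ν i = t * ∑ i, μ i := by
      rw [Finset.mul_sum]; exact Finset.sum_congr rfl fun i _ => h1 i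
    rw [hμ1, hν1] at this
    linarith
  funext i
  rw [h1 i, ht1, one_mul]

lemma integral_bind_kernel {α : Type*} [MeasurableSpace α] (κ : Kernel α α) (m : Measure α)
    (f : α → ℝ) (hf : Integrable f (m.bind κ)) :
    ∫ x, f x ∂(m.bind κ) = ∫ x, ∫ y, f y ∂(κ x) ∂m := by
  rw [Measure.comp_eq_comp_const_apply] at hf ⊢
  rw [Kernel.integral_comp hf]
  simp

/-- The marginal of `m` on `Fin N` is `μ`. -/
def HasMarg (μ : Fin N → ℝ) (m : Measure (EuclideanSpace ℝ (Fin n) × Fin N)) : Prop :=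
  ∀ j, m (Prod.snd ⁻¹' {j}) = ENNReal.ofReal (μ j)

lemma lintegral_snd (m : Measure (EuclideanSpace ℝ (Fin n) × Fin N)) (g : Fin N → ENNReal) :
    ∫⁻ q, g q.2 ∂m = ∑ i, g i * m (Prod.snd ⁻¹' {i}) := by
  have h1 : ∫⁻ q, g q.2 ∂m = ∫⁻ i, g i ∂(m.map Prod.snd) :=
    (lintegral_map (Measurable.of_discrete) measurable_snd).symm
  rw [h1, lintegral_fintype]
  exact Finset.sum_congr rfl fun i _ => by
    rw [Measure.map_apply measurable_snd (measurableSet_singleton i)]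

lemma integral_snd (m : Measure (EuclideanSpace ℝ (Fin n) × Fin N)) [IsFiniteMeasure m]
    (μ : Fin N → ℝ) (hμ : ∀ i, 0 < μ i) (hm : HasMarg μ m) (g : Fin N → ℝ) :
    ∫ q, g q.2 ∂m = ∑ i, μ i * g i := by
  have h1 : ∫ q, g q.2 ∂m = ∫ i, g i ∂(m.map Prod.snd) :=
    (integral_map measurable_snd.aemeasurable
      (Measurable.of_discrete).aestronglyMeasurable).symm
  rw [h1, integral_fintype (Integrable.of_finite)]
  refine Finset.sum_congr rfl fun i _ => ?_
  rw [Measure.real, Measure.map_apply measurable_snd (measurableSet_singleton i), hm i,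
    ENNReal.toReal_ofReal (hμ i).le, smul_eq_mul]

lemma marg_bind (κ : Kernel (EuclideanSpace ℝ (Fin n) × Fin N) (EuclideanSpace ℝ (Fin n) × Fin N))
    (P : Matrix (Fin N) (Fin N) ℝ)
    (hmarg : ∀ q j, κ q (Prod.snd ⁻¹' {j}) = ENNReal.ofReal (P q.2 j))
    (m : Measure (EuclideanSpace ℝ (Fin n) × Fin N)) (j : Fin N) :
    (m.bind κ) (Prod.snd ⁻¹' {j}) = ∑ i, ENNReal.ofReal (P i j) * m (Prod.snd ⁻¹' {i}) := by
  rw [Measure.bind_apply (measurable_snd (measurableSet_singleton j)) κ.measurable.aemeasurable]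
  simp_rw [hmarg]
  exact lintegral_snd m fun i => ENNReal.ofReal (P i j)

theorem abstract_existsUnique (hN : 2 ≤ N)
    (κ : Kernel (EuclideanSpace ℝ (Fin n) × Fin N) (EuclideanSpace ℝ (Fin n) × Fin N))
    [IsMarkovKernel κ]
    (P : Matrix (Fin N) (Fin N) ℝ) (hPpos : ∀ i j, 0 < P i j)
    (hmarg : ∀ q j, κ q (Prod.snd ⁻¹' {j}) = ENNReal.ofReal (P q.2 j))
    (μ : Fin N → ℝ) (hμpos : ∀ i, 0 < μ i) (hμ1 : ∑ i, μ i = 1)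
    (hμP : ∀ j, ∑ i, μ i * P i j = μ j)
    (ξ : Fin N → ℝ) (hξ : ∀ i, 0 < ξ i) (p : ℝ) (hp : 0 < p) (hp1 : p < 1)
    (ρ : ℝ) (hρ0 : 0 ≤ ρ) (hρ1 : ρ < 1)
    (hcontr : ∀ f C B, 0 ≤ C → FibHolder ξ p C B f →
      FibHolder ξ p (ρ * C) B (fun q => ∫ y, f y ∂(κ q)))
    (c : ℝ) (hc : 0 ≤ c)
    (hlyap : ∀ q, ∫⁻ y, ENNReal.ofReal (ξ y.2 * ‖y.1‖ ^ p) ∂(κ q)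
      ≤ ENNReal.ofReal (ρ * (ξ q.2 * ‖q.1‖ ^ p) + c)) :
    ∃! π : Measure (EuclideanSpace ℝ (Fin n) × Fin N),
      IsProbabilityMeasure π ∧ π.bind κ = π := by
  have hne : Nonempty (Fin N) := ⟨⟨0, by omega⟩⟩
  set T : (EuclideanSpace ℝ (Fin n) × Fin N → ℝ) → (EuclideanSpace ℝ (Fin n) × Fin N → ℝ) :=
    fun f q => ∫ y, f y ∂(κ q) with hT
  have hTk : ∀ f C B, 0 ≤ C → FibHolder ξ p C B f → ∀ k : ℕ,
      FibHolder ξ p (ρ ^ k * C) B (T^[k] f) := by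
    intro f C B hC hf k
    induction k with
    | zero => simpa using hf
    | succ k ih =>
      rw [Function.iterate_succ_apply']
      have := hcontr _ _ _ (by positivity) ih
      rwa [← mul_assoc, ← pow_succ'] at this
  -- asymptotic forgetting
  have hforget : ∀ (m : Measure (EuclideanSpace ℝ (Fin n) × Fin N)), IsProbabilityMeasure m →
      HasMarg μ m → ∀ f C B, 0 ≤ C → FibHolder ξ p C B f →
      Tendsto (fun k : ℕ => ∫ q, (T^[k] f) q ∂m - ∑ i, μ i * (T^[k] f) (0, i)) atTop (𝓝 0) := by
    intro m _ hm f C B hC hf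
    have hG := hTk f C B hC hf
    have e : ∀ k, ∫ q, (T^[k] f) q ∂m - ∑ i, μ i * (T^[k] f) (0, i)
        = ∫ q, ((T^[k] f) q - (T^[k] f) (0, q.2)) ∂m := by
      intro k
      rw [integral_sub ((hG k).integrable hp m), integral_snd m μ hμpos hm
        (fun i => (T^[k] f) (0, i))]
      refine Integrable.of_bound (C := B) ?_ (Eventually.of_forall fun q => (hG k).1 _)
      exact (((hG k).continuous hp).comp (by fun_prop : Continuous
        (fun q : EuclideanSpace ℝ (Fin n) × Fin N =>
        ((0 : EuclideanSpace ℝ (Fin n)), q.2)))).measurable.aestronglyMeasurable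
    simp_rw [e]
    have : (0:ℝ) = ∫ q : EuclideanSpace ℝ (Fin n) × Fin N, (0:ℝ) ∂m := by simp
    rw [this]
    refine tendsto_integral_of_dominated_convergence (fun _ => B + B) ?_ (integrable_const _) ?_ ?_
    · intro k
      exact (((hG k).continuous hp).sub (((hG k).continuous hp).comp (by fun_prop : Continuous
        (fun q : EuclideanSpace ℝ (Fin n) × Fin N =>
        ((0 : EuclideanSpace ℝ (Fin n)), q.2))))).measurable.aestronglyMeasurable
    · intro k
      refine Eventually.of_forall fun q => ?_
      rw [Real.norm_eq_abs]
      exact (abs_sub _ _).trans (add_le_add ((hG k).1 _) ((hG k).1 _))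
    · refine Eventually.of_forall fun q => ?_
      refine squeeze_zero_norm (a := fun k => ρ ^ k * C * ξ q.2 * ‖q.1 - 0‖ ^ p)
        (fun k => (hG k).2 q.2 q.1 0) ?_
      have := (((tendsto_pow_atTop_nhds_zero_of_lt_one hρ0 hρ1).mul_const C).mul_const
        (ξ q.2)).mul_const (‖q.1 - 0‖ ^ p)
      simpa using this
  have hbindprob : ∀ m : Measure (EuclideanSpace ℝ (Fin n) × Fin N), IsProbabilityMeasure m →
      IsProbabilityMeasure (m.bind κ) := fun m _ => inferInstance
  have hstep : ∀ m : Measure (EuclideanSpace ℝ (Fin n) × Fin N), IsProbabilityMeasure m →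
      ∀ f C B, FibHolder ξ p C B f → ∫ q, f q ∂(m.bind κ) = ∫ q, T f q ∂m := by
    intro m _ f C B hf
    exact integral_bind_kernel κ m f (hf.integrable hp _)
  -- existence
  have hex : ∃ π : Measure (EuclideanSpace ℝ (Fin n) × Fin N),
      IsProbabilityMeasure π ∧ π.bind κ = π := by
    set m₀ : Measure (EuclideanSpace ℝ (Fin n) × Fin N) :=
      ∑ i, ENNReal.ofReal (μ i) • Measure.dirac ((0 : EuclideanSpace ℝ (Fin n)), i) with hm₀
    have hmarg₀ : HasMarg μ m₀ := by
      intro j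
      rw [hm₀, Measure.finsetSum_apply]
      simp only [Measure.smul_apply, smul_eq_mul]
      rw [Finset.sum_eq_single j]
      · rw [Measure.dirac_apply' _ (measurable_snd (measurableSet_singleton j))]
        simp
      · intro i _ hij
        rw [Measure.dirac_apply' _ (measurable_snd (measurableSet_singleton j))]
        simp [hij]
      · simp
    have hprob₀ : IsProbabilityMeasure m₀ := by
      constructor
      rw [hm₀, Measure.finsetSum_apply]
      simp only [Measure.smul_apply, smul_eq_mul, measure_univ, mul_one]
      rw [← ENNReal.ofReal_sum_of_nonneg (fun i _ => (hμpos i).le), hμ1, ENNReal.ofReal_one]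
    have hmarg₁ : HasMarg μ (m₀.bind κ) := by
      intro j
      rw [marg_bind κ P hmarg]
      simp_rw [hmarg₀ _]
      rw [← hμP j, ENNReal.ofReal_sum_of_nonneg (fun i _ => (mul_pos (hμpos i) (hPpos i j)).le)]
      refine Finset.sum_congr rfl fun i _ => ?_
      rw [mul_comm, ENNReal.ofReal_mul (hμpos i).le]
    set M : ℕ → Measure (EuclideanSpace ℝ (Fin n) × Fin N) :=
      fun k => (fun m => m.bind κ)^[k] m₀ with hM
    have hMs : ∀ k, M (k + 1) = (M k).bind κ := fun k => Function.iterate_succ_apply' _ _ _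
    have hMp : ∀ k, IsProbabilityMeasure (M k) := by
      intro k
      induction k with
      | zero => exact hprob₀
      | succ k ih => rw [hMs]; exact hbindprob _ ih
    have hMint : ∀ k f C B, 0 ≤ C → FibHolder ξ p C B f → ∀ m, IsProbabilityMeasure m →
        ∫ q, f q ∂((fun m => m.bind κ)^[k] m) = ∫ q, (T^[k] f) q ∂m := by
      intro k
      induction k with
      | zero => intro f C B hC hf m _; rfl
      | succ k ih =>
        intro f C B hC hf m hm
        rw [Function.iterate_succ_apply, ih f C B hC hf _ (hbindprob m hm),
          Function.iterate_succ_apply', hstep m hm _ _ _ (hTk f C B hC hf k)]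
    have hdiff : ∀ f C B, 0 ≤ C → FibHolder ξ p C B f →
        Tendsto (fun k => ∫ q, f q ∂(M (k + 1)) - ∫ q, f q ∂(M k)) atTop (𝓝 0) := by
      intro f C B hC hf
      have h1 := hforget _ (hbindprob m₀ hprob₀) hmarg₁ f C B hC hf
      have h0 := hforget _ hprob₀ hmarg₀ f C B hC hf
      have := h1.sub h0
      rw [sub_zero] at this
      refine this.congr fun k => ?_
      have e1 : ∫ q, f q ∂(M (k + 1)) = ∫ q, (T^[k] f) q ∂(m₀.bind κ) := by
        rw [← hMint k f C B hC hf _ (hbindprob m₀ hprob₀), hM]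
        rfl
      have e0 : ∫ q, f q ∂(M k) = ∫ q, (T^[k] f) q ∂m₀ := hMint k f C B hC hf _ hprob₀
      rw [e1, e0]
      ring
    -- moment bound
    set R : ℝ := c / (1 - ρ) with hR
    have hR0 : 0 ≤ R := div_nonneg hc (by linarith)
    have hVm : Measurable (fun y : EuclideanSpace ℝ (Fin n) × Fin N =>
        ENNReal.ofReal (ξ y.2 * ‖y.1‖ ^ p)) := by
      refine ENNReal.measurable_ofReal.comp (Measurable.mul ?_ ?_)
      · exact (Measurable.of_discrete (f := ξ)).comp measurable_snd
      · exact (measurable_fst.norm).pow_const p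
    have hmom : ∀ k, ∫⁻ y, ENNReal.ofReal (ξ y.2 * ‖y.1‖ ^ p) ∂(M k) ≤ ENNReal.ofReal R := by
      intro k
      induction k with
      | zero =>
        have : ∫⁻ y, ENNReal.ofReal (ξ y.2 * ‖y.1‖ ^ p) ∂(M 0) = 0 := by
          change ∫⁻ y, ENNReal.ofReal (ξ y.2 * ‖y.1‖ ^ p) ∂m₀ = 0
          rw [hm₀, lintegral_finsetSum_measure]
          refine Finset.sum_eq_zero fun i _ => ?_
          rw [lintegral_smul_measure, lintegral_dirac' _ hVm]
          simp [Real.zero_rpow hp.ne']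
        rw [this]; exact zero_le
      | succ k ih =>
        have := hMp k
        rw [hMs, Measure.lintegral_bind κ.measurable.aemeasurable hVm.aemeasurable]
        calc ∫⁻ q, ∫⁻ y, ENNReal.ofReal (ξ y.2 * ‖y.1‖ ^ p) ∂(κ q) ∂(M k)
            ≤ ∫⁻ q, (ENNReal.ofReal ρ * ENNReal.ofReal (ξ q.2 * ‖q.1‖ ^ p) + ENNReal.ofReal c)
                ∂(M k) := by
              refine lintegral_mono fun q => (hlyap q).trans ?_
              rw [ENNReal.ofReal_add _ hc, ENNReal.ofReal_mul hρ0]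
              have := hξ q.2
              positivity
          _ = ENNReal.ofReal ρ * ∫⁻ q, ENNReal.ofReal (ξ q.2 * ‖q.1‖ ^ p) ∂(M k)
                + ENNReal.ofReal c := by
              rw [lintegral_add_right _ measurable_const, lintegral_const_mul _ hVm,
                lintegral_const, measure_univ, mul_one]
          _ ≤ ENNReal.ofReal ρ * ENNReal.ofReal R + ENNReal.ofReal c := by gcongr
          _ = ENNReal.ofReal R := by
              rw [← ENNReal.ofReal_mul hρ0, ← ENNReal.ofReal_add (by positivity) hc]
              congr 1
              rw [hR]
              have : 1 - ρ ≠ 0 := by linarith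
              field_simp
              ring
    -- tightness
    obtain ⟨i₁, hi₁⟩ := Finite.exists_min ξ
    have htight : IsTightMeasureSet (Set.range M) := by
      rw [isTightMeasureSet_iff_exists_isCompact_measure_compl_le]
      intro ε hε
      by_cases hεt : ε = ⊤
      · exact ⟨∅, isCompact_empty, fun _ _ => by rw [hεt]; exact le_top⟩
      have hε' : 0 < ε.toReal := ENNReal.toReal_pos hε.ne' hεt
      set A : ℝ := R / ε.toReal + 1 with hA
      have hA0 : 0 < A := by positivity
      set r : ℝ := (A / ξ i₁) ^ (1 / p) with hr
      refine ⟨Metric.closedBall 0 r ×ˢ Set.univ, (isCompact_closedBall _ _).prod isCompact_univ, ?_⟩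
      rintro _ ⟨k, rfl⟩
      have hsub : (Metric.closedBall (0 : EuclideanSpace ℝ (Fin n)) r ×ˢ (Set.univ : Set (Fin N)))ᶜ
          ⊆ {q | ENNReal.ofReal A ≤ ENNReal.ofReal (ξ q.2 * ‖q.1‖ ^ p)} := by
        intro q hq
        have hq' : r < ‖q.1‖ := by
          by_contra hcon
          exact hq ⟨by simpa using not_lt.1 hcon, Set.mem_univ _⟩
        refine ENNReal.ofReal_le_ofReal ?_
        have h1 : A / ξ i₁ ≤ ‖q.1‖ ^ p := by
          have hb : 0 ≤ A / ξ i₁ := (div_pos hA0 (hξ i₁)).le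
          have : r ^ p ≤ ‖q.1‖ ^ p := Real.rpow_le_rpow (Real.rpow_nonneg hb _) hq'.le hp.le
          rwa [hr, ← Real.rpow_mul hb, one_div_mul_cancel hp.ne', Real.rpow_one] at this
        calc A = ξ i₁ * (A / ξ i₁) := by rw [mul_div_cancel₀ _ (hξ i₁).ne']
          _ ≤ ξ q.2 * ‖q.1‖ ^ p :=
            mul_le_mul (hi₁ q.2) h1 (div_pos hA0 (hξ i₁)).le (hξ q.2).le
      refine (measure_mono hsub).trans ?_
      have hmk := mul_meas_ge_le_lintegral (μ := M k) hVm (ENNReal.ofReal A)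
      have h2 := hmk.trans (hmom k)
      have hA' : ENNReal.ofReal A ≠ 0 := by simpa using hA0
      have h3 := (ENNReal.le_div_iff_mul_le (Or.inl hA') (Or.inl ENNReal.ofReal_ne_top)).2
        ((mul_comm _ _).trans_le h2)
      refine h3.trans ?_
      rw [← ENNReal.ofReal_div_of_pos hA0]
      refine ENNReal.ofReal_le_of_le_toReal ?_
      rw [div_le_iff₀ hA0, hA, mul_add, mul_div_cancel₀ _ hε'.ne']
      linarith
    set Mp : ℕ → ProbabilityMeasure (EuclideanSpace ℝ (Fin n) × Fin N) :=
      fun k => ⟨M k, hMp k⟩ with hMpdef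
    have hcomp : IsCompact (closure (Set.range Mp)) := by
      refine isCompact_closure_of_isTightMeasureSet (htight.subset ?_)
      rintro _ ⟨_, ⟨k, rfl⟩, rfl⟩
      exact ⟨k, rfl⟩
    obtain ⟨π, -, hπ⟩ := hcomp.ultrafilter_le_nhds ((hyperfilter ℕ).map Mp) (by
      rw [le_principal_iff]
      exact Filter.univ_mem' (f := (hyperfilter ℕ : Filter ℕ))
        (fun k => subset_closure ⟨k, rfl⟩))
    have hπ' : Tendsto Mp (hyperfilter ℕ : Filter ℕ) (𝓝 π) := hπ
    rw [ProbabilityMeasure.tendsto_iff_forall_integral_tendsto] at hπ'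
    have hπf : ∀ f C B, FibHolder ξ p C B f →
        Tendsto (fun k => ∫ q, f q ∂(M k)) (hyperfilter ℕ : Filter ℕ)
          (𝓝 (∫ q, f q ∂(π : Measure (EuclideanSpace ℝ (Fin n) × Fin N)))) := by
      intro f C B hf
      exact hπ' (BoundedContinuousFunction.ofNormedAddCommGroup f (hf.continuous hp) B hf.1)
    refine ⟨π, inferInstance, ?_⟩
    have := hbindprob (π : Measure (EuclideanSpace ℝ (Fin n) × Fin N)) inferInstance
    refine measure_ext_fibHolder hξ hp hp1 _ _ fun f C hC hf => ?_
    rw [hstep _ inferInstance f C 1 hf]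
    have t1 := hπf _ _ _ (hcontr f C 1 hC hf)
    have t2 := hπf _ _ _ hf
    have t3 := (hdiff f C 1 hC hf).mono_left Nat.hyperfilter_le_atTop
    have t4 := t3.add t2
    rw [zero_add] at t4
    refine tendsto_nhds_unique t1 (t4.congr fun k => ?_)
    rw [hMs k, hstep _ (hMp k) f C 1 hf]
    simp [hT]
  -- uniqueness
  have hinvmarg : ∀ π : Measure (EuclideanSpace ℝ (Fin n) × Fin N), IsProbabilityMeasure π →
      π.bind κ = π → HasMarg μ π := by
    intro π _ hinv
    set ν : Fin N → ℝ := fun j => (π (Prod.snd ⁻¹' {j})).toReal with hν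
    have hνo : ∀ j, π (Prod.snd ⁻¹' {j}) = ENNReal.ofReal (ν j) := fun j =>
      (ENNReal.ofReal_toReal (measure_ne_top _ _)).symm
    have hν0 : ∀ j, 0 ≤ ν j := fun j => ENNReal.toReal_nonneg
    have hνP : ∀ j, ∑ i, ν i * P i j = ν j := by
      intro j
      have := marg_bind κ P hmarg π j
      rw [hinv] at this
      simp_rw [hνo] at this
      have h2 : ∀ i, ENNReal.ofReal (P i j) * ENNReal.ofReal (ν i)
          = ENNReal.ofReal (ν i * P i j) := fun i => by
        rw [mul_comm, ENNReal.ofReal_mul (hν0 i)]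
      simp_rw [h2] at this
      rw [← ENNReal.ofReal_sum_of_nonneg (fun i _ => mul_nonneg (hν0 i) (hPpos i j).le)] at this
      exact ((ENNReal.ofReal_eq_ofReal_iff (hν0 j)
        (Finset.sum_nonneg fun i _ => mul_nonneg (hν0 i) (hPpos i j).le)).1 this).symm
    have hν1 : ∑ i, ν i = 1 := by
      have := lintegral_snd π (fun _ => 1)
      rw [lintegral_one, measure_univ] at this
      simp_rw [hνo, one_mul] at this
      rw [← ENNReal.ofReal_sum_of_nonneg (fun i _ => hν0 i)] at this
      exact ENNReal.ofReal_eq_one.1 this.symm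
    have := stat_unique P hPpos μ ν hμpos hμ1 hν1 hμP hνP
    intro j
    rw [hνo, this]
  obtain ⟨π, hπp, hπ⟩ := hex
  refine ⟨π, ⟨hπp, hπ⟩, ?_⟩
  rintro π' ⟨hπ'p, hπ'⟩
  have hiter : ∀ m : Measure (EuclideanSpace ℝ (Fin n) × Fin N), IsProbabilityMeasure m →
      m.bind κ = m → ∀ f C B, 0 ≤ C → FibHolder ξ p C B f → ∀ k,
      ∫ q, (T^[k] f) q ∂m = ∫ q, f q ∂m := by
    intro m hm hinv f C B hC hf k
    induction k with
    | zero => rfl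
    | succ k ih =>
      rw [Function.iterate_succ_apply', ← hstep m hm _ _ _ (hTk f C B hC hf k), hinv, ih]
  refine measure_ext_fibHolder hξ hp hp1 _ _ fun f C hC hf => ?_
  have t1 := hforget π hπp (hinvmarg π hπp hπ) f C 1 hC hf
  have t2 := hforget π' hπ'p (hinvmarg π' hπ'p hπ') f C 1 hC hf
  simp_rw [hiter π hπp hπ f C 1 hC hf] at t1
  simp_rw [hiter π' hπ'p hπ' f C 1 hC hf] at t2
  have t3 := t2.sub t1
  simp only [sub_sub_sub_cancel_right, sub_zero] at t3
  have := tendsto_nhds_unique t3 tendsto_const_nhds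
  linarith

end Abstract2
section KernelPart

open Filter Topology

variable {n m N : ℕ}

/-- The space component of one Euler–Maruyama step. -/
noncomputable def EMstep (b : EuclideanSpace ℝ (Fin n) → Fin N → EuclideanSpace ℝ (Fin n))
    (σ : EuclideanSpace ℝ (Fin n) → Fin N → Matrix (Fin n) (Fin m) ℝ)
    (δ : ℝ) (q : EuclideanSpace ℝ (Fin n) × Fin N) (z : Fin m → ℝ) : EuclideanSpace ℝ (Fin n) :=
  q.1 + δ • b q.1 q.2 +
        Real.sqrt δ • ((WithLp.equiv 2 (Fin n → ℝ)).symm ((σ q.1 q.2).mulVec z))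

lemma hsNorm_nonneg (M : Matrix (Fin n) (Fin m) ℝ) : 0 ≤ hsNorm M := Real.sqrt_nonneg _

instance stdGaussianPi_prob : IsProbabilityMeasure (stdGaussianPi m) := by
  unfold stdGaussianPi; infer_instance

lemma lintegral_rowMeasure (P : Matrix (Fin N) (Fin N) ℝ) (i : Fin N) (g : Fin N → ENNReal) :
    ∫⁻ j, g j ∂(rowMeasure P i) = ∑ j, ENNReal.ofReal (P i j) * g j := by
  unfold rowMeasure
  rw [lintegral_finsetSum_measure]
  refine Finset.sum_congr rfl fun j _ => ?_
  rw [lintegral_smul_measure, lintegral_dirac, smul_eq_mul]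

lemma rowMeasure_prob (P : Matrix (Fin N) (Fin N) ℝ) (hP : ∀ i j, 0 ≤ P i j)
    (hP1 : ∀ i, ∑ j, P i j = 1) (i : Fin N) : IsProbabilityMeasure (rowMeasure P i) := by
  constructor
  have h := lintegral_rowMeasure P i (fun _ => 1)
  rw [lintegral_one] at h
  rw [h]
  simp only [mul_one]
  rw [← ENNReal.ofReal_sum_of_nonneg (fun j _ => hP i j), hP1, ENNReal.ofReal_one]

lemma EMstep_continuous (b : EuclideanSpace ℝ (Fin n) → Fin N → EuclideanSpace ℝ (Fin n))
    (σ : EuclideanSpace ℝ (Fin n) → Fin N → Matrix (Fin n) (Fin m) ℝ)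
    (hadd : ∀ x y i, σ x i = σ y i) (L : ℝ)
    (hLip : ∀ i x y, ‖b x i - b y i‖ ≤ L * ‖x - y‖) (δ : ℝ) :
    Continuous (fun r : (EuclideanSpace ℝ (Fin n) × Fin N) × (Fin m → ℝ) =>
      EMstep b σ δ r.1 r.2) := by
  have hb : Continuous (fun q : EuclideanSpace ℝ (Fin n) × Fin N => b q.1 q.2) := by
    rw [continuous_prod_of_discrete_right]
    intro i
    have : LipschitzWith (Real.toNNReal L) (fun x => b x i) := by
      refine LipschitzWith.of_dist_le_mul fun x y => ?_
      rw [dist_eq_norm, dist_eq_norm]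
      exact (hLip i x y).trans
        (mul_le_mul_of_nonneg_right (Real.le_coe_toNNReal L) (norm_nonneg _))
    exact this.continuous
  have hs : Continuous (fun q : EuclideanSpace ℝ (Fin n) × Fin N => σ q.1 q.2) := by
    rw [continuous_prod_of_discrete_right]
    intro i
    have : (fun x => σ x i) = fun _ => σ 0 i := funext fun x => hadd x 0 i
    show Continuous (fun x => σ x i)
    rw [this]
    exact continuous_const
  unfold EMstep
  have h1 : Continuous (fun r : (EuclideanSpace ℝ (Fin n) × Fin N) × (Fin m → ℝ) =>
      (σ r.1.1 r.1.2).mulVec r.2) :=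
    Continuous.matrix_mulVec (hs.comp continuous_fst) continuous_snd
  have h2 : Continuous (fun r : (EuclideanSpace ℝ (Fin n) × Fin N) × (Fin m → ℝ) =>
      (WithLp.equiv 2 (Fin n → ℝ)).symm ((σ r.1.1 r.1.2).mulVec r.2)) :=
    (PiLp.continuous_toLp 2 _).comp h1
  exact ((continuous_fst.comp continuous_fst).add
    ((hb.comp continuous_fst).const_smul δ)).add (h2.const_smul (Real.sqrt δ))

lemma EMKernel_eq (Q : Matrix (Fin N) (Fin N) ℝ)
    (b : EuclideanSpace ℝ (Fin n) → Fin N → EuclideanSpace ℝ (Fin n))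
    (σ : EuclideanSpace ℝ (Fin n) → Fin N → Matrix (Fin n) (Fin m) ℝ) (δ : ℝ)
    (hP : ∀ i j, 0 ≤ matExp (δ • Q) i j)
    (hP1 : ∀ i, ∑ j, matExp (δ • Q) i j = 1)
    (q : EuclideanSpace ℝ (Fin n) × Fin N) (hc : Continuous (EMstep b σ δ q)) :
    EMKernel Q b σ δ q = ∑ j, ENNReal.ofReal (matExp (δ • Q) q.2 j) •
      Measure.map (fun z => (EMstep b σ δ q z, j)) (stdGaussianPi m) := by
  haveI := rowMeasure_prob _ hP hP1 q.2
  have hm : Measurable (fun zj : (Fin m → ℝ) × Fin N => (EMstep b σ δ q zj.1, zj.2)) :=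
    (hc.measurable.comp measurable_fst).prodMk measurable_snd
  ext A hA
  have h0 : EMKernel Q b σ δ q = Measure.map
    (fun zj : (Fin m → ℝ) × Fin N => (EMstep b σ δ q zj.1, zj.2))
    ((stdGaussianPi m).prod (rowMeasure (matExp (δ • Q)) q.2)) := rfl
  rw [h0, Measure.map_apply hm hA, Measure.prod_apply_symm (hm hA), lintegral_rowMeasure,
    Measure.finsetSum_apply]
  refine Finset.sum_congr rfl fun j _ => ?_
  have hj : Measurable (fun z => (EMstep b σ δ q z, j)) := hc.measurable.prodMk measurable_const
  rw [Measure.smul_apply, Measure.map_apply hj hA, smul_eq_mul]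
  rfl

lemma EMKernel_lintegral (Q : Matrix (Fin N) (Fin N) ℝ)
    (b : EuclideanSpace ℝ (Fin n) → Fin N → EuclideanSpace ℝ (Fin n))
    (σ : EuclideanSpace ℝ (Fin n) → Fin N → Matrix (Fin n) (Fin m) ℝ) (δ : ℝ)
    (hP : ∀ i j, 0 ≤ matExp (δ • Q) i j)
    (hP1 : ∀ i, ∑ j, matExp (δ • Q) i j = 1)
    (q : EuclideanSpace ℝ (Fin n) × Fin N) (hc : Continuous (EMstep b σ δ q))
    (F : EuclideanSpace ℝ (Fin n) × Fin N → ENNReal) (hF : Measurable F) :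
    ∫⁻ y, F y ∂(EMKernel Q b σ δ q) = ∑ j, ENNReal.ofReal (matExp (δ • Q) q.2 j) *
      ∫⁻ z, F (EMstep b σ δ q z, j) ∂(stdGaussianPi m) := by
  rw [EMKernel_eq Q b σ δ hP hP1 q hc, lintegral_finsetSum_measure]
  refine Finset.sum_congr rfl fun j _ => ?_
  have hj : Measurable (fun z => (EMstep b σ δ q z, j)) := hc.measurable.prodMk measurable_const
  rw [lintegral_smul_measure, lintegral_map hF hj, smul_eq_mul]

lemma EMKernel_integral (Q : Matrix (Fin N) (Fin N) ℝ)
    (b : EuclideanSpace ℝ (Fin n) → Fin N → EuclideanSpace ℝ (Fin n))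
    (σ : EuclideanSpace ℝ (Fin n) → Fin N → Matrix (Fin n) (Fin m) ℝ) (δ : ℝ)
    (hP : ∀ i j, 0 ≤ matExp (δ • Q) i j)
    (hP1 : ∀ i, ∑ j, matExp (δ • Q) i j = 1)
    (q : EuclideanSpace ℝ (Fin n) × Fin N) (hc : Continuous (EMstep b σ δ q))
    (f : EuclideanSpace ℝ (Fin n) × Fin N → ℝ) (hf : Continuous f) (B : ℝ) (hB : ∀ q, |f q| ≤ B) :
    ∫ y, f y ∂(EMKernel Q b σ δ q) = ∑ j, matExp (δ • Q) q.2 j *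
      ∫ z, f (EMstep b σ δ q z, j) ∂(stdGaussianPi m) := by
  have hj : ∀ j : Fin N, Measurable (fun z => (EMstep b σ δ q z, j)) :=
    fun j => hc.measurable.prodMk measurable_const
  rw [EMKernel_eq Q b σ δ hP hP1 q hc, integral_finsetSum_measure]
  · refine Finset.sum_congr rfl fun j _ => ?_
    rw [integral_smul_measure, integral_map (hj j).aemeasurable hf.aestronglyMeasurable,
      ENNReal.toReal_ofReal (hP _ _), smul_eq_mul]
  · intro j _
    haveI : IsProbabilityMeasure (Measure.map (fun z => (EMstep b σ δ q z, j)) (stdGaussianPi m)) :=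
      Measure.isProbabilityMeasure_map (hj j).aemeasurable
    refine Integrable.smul_measure ?_ ENNReal.ofReal_ne_top
    exact Integrable.of_bound hf.aestronglyMeasurable B (Eventually.of_forall hB)

lemma EMKernel_measurable (Q : Matrix (Fin N) (Fin N) ℝ)
    (b : EuclideanSpace ℝ (Fin n) → Fin N → EuclideanSpace ℝ (Fin n))
    (σ : EuclideanSpace ℝ (Fin n) → Fin N → Matrix (Fin n) (Fin m) ℝ) (δ : ℝ)
    (hP : ∀ i j, 0 ≤ matExp (δ • Q) i j)
    (hP1 : ∀ i, ∑ j, matExp (δ • Q) i j = 1)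
    (hc : Continuous (fun r : (EuclideanSpace ℝ (Fin n) × Fin N) × (Fin m → ℝ) =>
      EMstep b σ δ r.1 r.2)) :
    Measurable (EMKernel Q b σ δ) := by
  refine Measure.measurable_of_measurable_coe _ fun A hA => ?_
  have h : (fun q => EMKernel Q b σ δ q A) = fun q => ∑ j, ENNReal.ofReal (matExp (δ • Q) q.2 j) *
      ∫⁻ z, A.indicator (fun _ => (1 : ENNReal)) (EMstep b σ δ q z, j) ∂(stdGaussianPi m) := by
    funext q
    rw [← EMKernel_lintegral Q b σ δ hP hP1 q (hc.comp (Continuous.prodMk_right q)) _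
      (measurable_const.indicator hA), lintegral_indicator_const hA, one_mul]
  rw [h]
  refine Finset.measurable_sum _ fun j _ => ?_
  refine Measurable.mul ?_ ?_
  · exact (measurable_from_top (f := fun i : Fin N =>
      ENNReal.ofReal (matExp (δ • Q) i j))).comp measurable_snd
  · have : Measurable (fun r : (EuclideanSpace ℝ (Fin n) × Fin N) × (Fin m → ℝ) =>
        A.indicator (fun _ => (1 : ENNReal)) (EMstep b σ δ r.1 r.2, j)) :=
      (measurable_const.indicator hA).comp (hc.measurable.prodMk measurable_const)
    exact this.lintegral_prod_right'

lemma EMstep_integrable (b : EuclideanSpace ℝ (Fin n) → Fin N → EuclideanSpace ℝ (Fin n))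
    (σ : EuclideanSpace ℝ (Fin n) → Fin N → Matrix (Fin n) (Fin m) ℝ)
    (δ : ℝ) (q : EuclideanSpace ℝ (Fin n) × Fin N) :
    Integrable (fun z => EMstep b σ δ q z) (stdGaussianPi m) := by
  have hid : Integrable (fun z : Fin m → ℝ => z) (stdGaussianPi m) := by
    refine Integrable.of_eval fun k => ?_
    have h1 : Integrable (fun x : ℝ => x) (gaussianReal 0 1) :=
      (memLp_id_gaussianReal 1).integrable (by norm_num)
    exact (measurePreserving_eval (fun _ : Fin m => gaussianReal 0 1) k).integrable_comp_of_integrable h1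
  let T : (Fin m → ℝ) →L[ℝ] EuclideanSpace ℝ (Fin n) :=
    LinearMap.toContinuousLinearMap
      ((WithLp.linearEquiv 2 ℝ (Fin n → ℝ)).symm.toLinearMap ∘ₗ (σ q.1 q.2).mulVecLin)
  have hT := T.integrable_comp hid
  unfold EMstep
  exact (integrable_const _).add (hT.smul (Real.sqrt δ))

lemma drift_bound (b : EuclideanSpace ℝ (Fin n) → Fin N → EuclideanSpace ℝ (Fin n))
    (L : ℝ) (hL : 0 ≤ L)
    (hLip : ∀ i x y, ‖b x i - b y i‖ ≤ L * ‖x - y‖) (β : Fin N → ℝ)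
    (hH2 : ∀ i x y, 2 * (inner ℝ (x - y) (b x i - b y i) : ℝ) ≤ β i * ‖x - y‖ ^ 2)
    (p : ℝ) (hp : 0 < p) (δ : ℝ) (hδ : 0 ≤ δ) (i : Fin N) (x y : EuclideanSpace ℝ (Fin n)) :
    ‖(x - y) + δ • (b x i - b y i)‖ ^ p ≤
      Real.exp (p / 2 * β i * δ) * Real.exp (p / 2 * L ^ 2 * δ ^ 2) * ‖x - y‖ ^ p := by
  have h1 : ‖(x - y) + δ • (b x i - b y i)‖ ^ 2 ≤
      Real.exp (β i * δ + L ^ 2 * δ ^ 2) * ‖x - y‖ ^ 2 := by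
    rw [norm_add_sq_real, inner_smul_right, norm_smul, Real.norm_of_nonneg hδ]
    have h2 := hH2 i x y
    have h3 : ‖b x i - b y i‖ ^ 2 ≤ (L * ‖x - y‖) ^ 2 :=
      pow_le_pow_left₀ (norm_nonneg _) (hLip i x y) 2
    have h4 := Real.add_one_le_exp (β i * δ + L ^ 2 * δ ^ 2)
    have h5 := mul_le_mul_of_nonneg_right h4 (sq_nonneg ‖x - y‖)
    have h6 := mul_le_mul_of_nonneg_left h2 hδ
    have h7 := mul_le_mul_of_nonneg_left h3 (sq_nonneg δ)
    nlinarith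
  have h2 : ∀ v : EuclideanSpace ℝ (Fin n), ‖v‖ ^ p = (‖v‖ ^ 2) ^ (p / 2) := by
    intro v
    rw [← Real.rpow_natCast, ← Real.rpow_mul (norm_nonneg _)]
    congr 1; push_cast; ring
  rw [h2, h2 (x - y)]
  refine (Real.rpow_le_rpow (sq_nonneg _) h1 (by positivity)).trans (le_of_eq ?_)
  rw [Real.mul_rpow (Real.exp_pos _).le (sq_nonneg _), ← Real.exp_mul, ← Real.exp_add]
  congr 2; ring

end KernelPart
theorem stmt5 {n m N : ℕ} (hN : 2 ≤ N)
    (Q : Matrix (Fin N) (Fin N) ℝ)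
    (hQ : IsConservativeQMatrix Q) (hirr : MatrixIrreducible Q)
    (μ : Fin N → ℝ) (hμpos : ∀ i, 0 < μ i) (hμsum : ∑ i, μ i = 1)
    (hμstat : ∀ j, ∑ i, μ i * Q i j = 0)
    (b : EuclideanSpace ℝ (Fin n) → Fin N → EuclideanSpace ℝ (Fin n))
    (σ : EuclideanSpace ℝ (Fin n) → Fin N → Matrix (Fin n) (Fin m) ℝ)
    -- additive noise : `σ` does not depend on the space variable
    (hadd : ∀ x y i, σ x i = σ y i)
    -- global Lipschitz condition
    (L : ℝ) (hL : 0 ≤ L)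
    (hLip : ∀ i x y, ‖b x i - b y i‖ + hsNorm (σ x i - σ y i) ≤ L * ‖x - y‖)
    -- condition (H)
    (c₀ : ℝ) (hc₀ : 0 < c₀) (β : Fin N → ℝ)
    (hH1 : ∀ i x, 2 * (inner ℝ x (b x i) : ℝ) + hsNorm (σ x i) ^ 2 ≤ c₀ + β i * ‖x‖ ^ 2)
    (hH2 : ∀ i x y, 2 * (inner ℝ (x - y) (b x i - b y i) : ℝ)
        + hsNorm (σ x i - σ y i) ^ 2 ≤ β i * ‖x - y‖ ^ 2)
    -- averaging condition
    (havg : ∑ i, μ i * β i < 0)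
    -- `p`, `η_p` and the Perron–Frobenius eigenvector `ξ`
    (p : ℝ) (hp : 0 < p) (hp1 : p < 1) (ηp : ℝ)
    (hη : IsGreatest (spectrumRe (Q + (p / 2) • Matrix.diagonal β)) (-ηp))
    (hηpos : 0 < ηp)
    (ξ : Fin N → ℝ) (hξpos : ∀ i, 0 < ξ i)
    (hξeig : (Q + (p / 2) • Matrix.diagonal β).mulVec ξ = (-ηp) • ξ)
    -- the constants of Theorem 3.1
    (ξhat ξbar β₀ q₀ α : ℝ)
    (hξhat : IsGreatest (Set.range ξ) ξhat)
    (hξbar : IsLeast (Set.range ξ) ξbar⁻¹)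
    (hβ₀ : IsGreatest (Set.range fun i => |β i|) β₀)
    (hq₀ : IsGreatest (Set.range fun i => -Q i i) q₀)
    (hα : α = p * (β₀ + 4 * L ^ 2 * (3 + 4 * β₀)
        + (4 : ℝ) ^ ((2 + p) / 2) * β₀ * ((4 : ℝ) ^ (p / 2) * L ^ p + q₀ * ξhat * ξbar)))
    -- the stepsize
    (δ : ℝ) (hδ0 : 0 < δ) (hδ1 : δ < 1)
    (hδ : δ < min (1 / (16 * L ^ 2)) ((ηp / α) ^ (2 / p))) :
    ∃! π : Measure (EuclideanSpace ℝ (Fin n) × Fin N),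
      IsProbabilityMeasure π ∧ IsInvariantMeasure (EMKernel Q b σ δ) π := by

  have hNe : Nonempty (Fin N) := ⟨⟨0, by omega⟩⟩
  obtain ⟨i₀⟩ := hNe
  -- elementary constants
  have hhi : ∀ i, ξ i ≤ ξhat := fun i => hξhat.2 ⟨i, rfl⟩
  have hlo : ∀ i, ξbar⁻¹ ≤ ξ i := fun i => hξbar.2 ⟨i, rfl⟩
  have hbar : 0 < ξbar := by
    obtain ⟨k, hk⟩ := hξbar.1
    exact inv_pos.1 (hk ▸ hξpos k)
  have hhat : 0 < ξhat := (hξpos i₀).trans_le (hhi i₀)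
  have hβ : ∀ i, |β i| ≤ β₀ := fun i => hβ₀.2 ⟨i, rfl⟩
  have hβ0 : 0 ≤ β₀ := (abs_nonneg _).trans (hβ i₀)
  have hq : ∀ i, -Q i i ≤ q₀ := fun i => hq₀.2 ⟨i, rfl⟩
  have hq0 : 0 ≤ q₀ := by
    refine le_trans ?_ (hq i₀)
    have h := hQ.2 i₀
    rw [← Finset.add_sum_erase _ _ (Finset.mem_univ i₀)] at h
    have h2 : 0 ≤ ∑ j ∈ Finset.univ.erase i₀, Q i₀ j :=
      Finset.sum_nonneg fun j hj => hQ.1 i₀ j (Finset.ne_of_mem_erase hj).symm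
    linarith
  have hδa : δ < 1 / (16 * L ^ 2) := hδ.trans_le (min_le_left _ _)
  have hδb : δ < (ηp / α) ^ (2 / p) := hδ.trans_le (min_le_right _ _)
  have hLpos : 0 < L := by
    rcases hL.lt_or_eq with h | h
    · exact h
    · rw [← h] at hδa
      norm_num at hδa
      linarith
  have hkey : p * (L ^ 2 + β₀ * q₀ * ξhat * ξbar) ≤ α := by
    rw [hα]
    refine mul_le_mul_of_nonneg_left ?_ hp.le
    have e1 : (1 : ℝ) ≤ (4 : ℝ) ^ ((2 + p) / 2) :=
      Real.one_le_rpow (by norm_num) (by positivity)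
    have e2 : 0 ≤ (4 : ℝ) ^ (p / 2) * L ^ p := by positivity
    have e3 : 0 ≤ q₀ * ξhat * ξbar := by positivity
    have e4 : β₀ * (q₀ * ξhat * ξbar) ≤
        (4 : ℝ) ^ ((2 + p) / 2) * β₀ * ((4 : ℝ) ^ (p / 2) * L ^ p + q₀ * ξhat * ξbar) := by
      refine mul_le_mul ?_ (by linarith) e3 (by positivity)
      nlinarith
    have e5 : 0 ≤ L ^ 2 * β₀ := by positivity
    have e6 : 0 ≤ L ^ 2 := by positivity
    nlinarith
  have hαpos : 0 < α := lt_of_lt_of_le (by positivity) hkey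
  have hαδ : α * δ < ηp := by
    have h1 : δ ^ (p / 2) < ηp / α := by
      have h := Real.rpow_lt_rpow hδ0.le hδb (z := p / 2) (by positivity)
      rw [← Real.rpow_mul (by positivity)] at h
      have : 2 / p * (p / 2) = 1 := by field_simp
      rwa [this, Real.rpow_one] at h
    have h2 : δ ≤ δ ^ (p / 2) := by
      have := Real.rpow_le_rpow_of_exponent_ge hδ0 hδ1.le (show p / 2 ≤ 1 by linarith)
      rwa [Real.rpow_one] at this
    have h3 := (lt_div_iff₀ hαpos).1 (h2.trans_lt h1)
    linarith
  -- transition matrix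
  have hP : ∀ i j, 0 ≤ matExp (δ • Q) i j := fun i j => matExp_nonneg hQ hq hδ0.le i j
  have hPpos : ∀ i j, 0 < matExp (δ • Q) i j := fun i j => matExp_pos hQ hirr hq hδ0 i j
  have hP1 : ∀ i, ∑ j, matExp (δ • Q) i j = 1 := fun i => by
    refine matExp_rowsum _ (fun k => ?_) i
    simp only [Matrix.smul_apply, smul_eq_mul]
    rw [← Finset.mul_sum, hQ.2 k, mul_zero]
  have hμP : ∀ j, ∑ i, μ i * matExp (δ • Q) i j = μ j := fun j => by
    refine matExp_stat _ μ (fun k => ?_) j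
    simp only [Matrix.smul_apply, smul_eq_mul]
    have : ∀ i, μ i * (δ * Q i k) = δ * (μ i * Q i k) := fun i => by ring
    simp only [this]
    rw [← Finset.mul_sum, hμstat k, mul_zero]
  -- drift
  have hLip' : ∀ i x y, ‖b x i - b y i‖ ≤ L * ‖x - y‖ := fun i x y => by
    have := hLip i x y
    have := hsNorm_nonneg (σ x i - σ y i)
    linarith
  have hH2' : ∀ i x y, 2 * (inner ℝ (x - y) (b x i - b y i) : ℝ) ≤ β i * ‖x - y‖ ^ 2 :=
    fun i x y => by
      have := hH2 i x y
      have := sq_nonneg (hsNorm (σ x i - σ y i))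
      linarith
  have hcont := EMstep_continuous b σ hadd L hLip' δ
  have hcq : ∀ q, Continuous (EMstep b σ δ q) := fun q => hcont.comp (Continuous.prodMk_right q)
  have hdiff : ∀ i x y z, EMstep b σ δ (x, i) z - EMstep b σ δ (y, i) z
      = (x - y) + δ • (b x i - b y i) := by
    intro i x y z
    simp only [EMstep, hadd x y i, smul_sub]
    abel
  set ρ : ℝ := Real.exp (p / 2 * L ^ 2 * δ ^ 2) *
    Real.exp (-ηp * δ + p * β₀ * q₀ * ξhat * ξbar * δ ^ 2 / 2) with hρ
  have hρ0 : 0 ≤ ρ := by positivity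
  have hρ1 : ρ < 1 := by
    rw [hρ, ← Real.exp_add, Real.exp_lt_one_iff]
    have h1 := mul_le_mul_of_nonneg_right hkey (sq_nonneg δ)
    have h2 := mul_lt_mul_of_pos_right hαδ hδ0
    have h3 : 0 < α * δ ^ 2 := by positivity
    nlinarith
  have hmain : ∀ i x y, ∑ j, matExp (δ • Q) i j *
      (ξ j * ‖(x - y) + δ • (b x i - b y i)‖ ^ p) ≤ ρ * (ξ i * ‖x - y‖ ^ p) := by
    intro i x y
    have h1 := drift_bound b L hL hLip' β hH2' p hp δ hδ0.le i x y
    have h2 := matExp_weighted hQ hq hq0 β β₀ hβ p hp ηp ξ hξeig ξhat ξbar hbar hhi hlo δ hδ0.le i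
    have h3 : 0 ≤ ∑ j, matExp (δ • Q) i j * ξ j :=
      Finset.sum_nonneg fun j _ => mul_nonneg (hP i j) (hξpos j).le
    calc ∑ j, matExp (δ • Q) i j * (ξ j * ‖(x - y) + δ • (b x i - b y i)‖ ^ p)
        = (∑ j, matExp (δ • Q) i j * ξ j) * ‖(x - y) + δ • (b x i - b y i)‖ ^ p := by
          rw [Finset.sum_mul]
          exact Finset.sum_congr rfl fun j _ => by ring
      _ ≤ (∑ j, matExp (δ • Q) i j * ξ j) * (Real.exp (p / 2 * β i * δ) *
            Real.exp (p / 2 * L ^ 2 * δ ^ 2) * ‖x - y‖ ^ p) :=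
          mul_le_mul_of_nonneg_left h1 h3
      _ = (Real.exp (p / 2 * β i * δ) * ∑ j, matExp (δ • Q) i j * ξ j) *
            (Real.exp (p / 2 * L ^ 2 * δ ^ 2) * ‖x - y‖ ^ p) := by ring
      _ ≤ (Real.exp (-ηp * δ + p * β₀ * q₀ * ξhat * ξbar * δ ^ 2 / 2) * ξ i) *
            (Real.exp (p / 2 * L ^ 2 * δ ^ 2) * ‖x - y‖ ^ p) :=
          mul_le_mul_of_nonneg_right h2 (by positivity)
      _ = ρ * (ξ i * ‖x - y‖ ^ p) := by rw [hρ]; ring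
  -- the kernel
  let κ : Kernel (EuclideanSpace ℝ (Fin n) × Fin N) (EuclideanSpace ℝ (Fin n) × Fin N) :=
    ⟨EMKernel Q b σ δ, EMKernel_measurable Q b σ δ hP hP1 hcont⟩
  have hκ : ∀ q, κ q = EMKernel Q b σ δ q := fun q => rfl
  have hLint := fun q => EMKernel_lintegral Q b σ δ hP hP1 q (hcq q)
  have hMarkov : IsMarkovKernel κ := by
    refine ⟨fun q => ⟨?_⟩⟩
    have h := hLint q (fun _ => 1) measurable_const
    rw [lintegral_one] at h
    rw [hκ, h]
    simp only [lintegral_one, measure_univ, mul_one]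
    rw [← ENNReal.ofReal_sum_of_nonneg (fun j _ => hP q.2 j), hP1, ENNReal.ofReal_one]
  have hmarg : ∀ q j, κ q (Prod.snd ⁻¹' {j}) = ENNReal.ofReal (matExp (δ • Q) q.2 j) := by
    intro q j
    have hA : MeasurableSet (Prod.snd ⁻¹' {j} : Set (EuclideanSpace ℝ (Fin n) × Fin N)) :=
      measurable_snd (measurableSet_singleton j)
    have h := hLint q ((Prod.snd ⁻¹' {j}).indicator fun _ => 1) (measurable_const.indicator hA)
    rw [lintegral_indicator_const hA, one_mul] at h
    rw [hκ, h, Finset.sum_eq_single j]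
    · simp
    · intro k _ hk
      simp [hk]
    · simp
  have hcontr : ∀ f C B, 0 ≤ C → FibHolder ξ p C B f →
      FibHolder ξ p (ρ * C) B (fun q => ∫ y, f y ∂(κ q)) := by
    intro f C B hC hf
    have hfc := hf.continuous hp
    refine ⟨fun q => ?_, fun i x y => ?_⟩
    · have := norm_integral_le_of_norm_le_const (μ := κ q) (f := f)
        (Filter.Eventually.of_forall hf.1)
      simpa using this
    · have hI := fun q => EMKernel_integral Q b σ δ hP hP1 q (hcq q) f hfc B hf.1
      show |∫ y, f y ∂(EMKernel Q b σ δ (x, i)) - ∫ z, f z ∂(EMKernel Q b σ δ (y, i))| ≤ _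
      rw [hI, hI, ← Finset.sum_sub_distrib]
      refine (Finset.abs_sum_le_sum_abs _ _).trans ?_
      have hint : ∀ q j, Integrable (fun z => f (EMstep b σ δ q z, j)) (stdGaussianPi m) :=
        fun q j => Integrable.of_bound
          (hfc.comp ((hcq q).prodMk continuous_const)).aestronglyMeasurable B
          (Filter.Eventually.of_forall fun z => hf.1 _)
      have hj : ∀ j, |matExp (δ • Q) i j * ∫ z, f (EMstep b σ δ (x, i) z, j) ∂(stdGaussianPi m) -
          matExp (δ • Q) i j * ∫ z, f (EMstep b σ δ (y, i) z, j) ∂(stdGaussianPi m)| ≤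
          C * (matExp (δ • Q) i j * (ξ j * ‖(x - y) + δ • (b x i - b y i)‖ ^ p)) := by
        intro j
        rw [← mul_sub, abs_mul, abs_of_nonneg (hP i j), ← integral_sub (hint _ j) (hint _ j)]
        have h1 : |∫ z, (f (EMstep b σ δ (x, i) z, j) - f (EMstep b σ δ (y, i) z, j))
            ∂(stdGaussianPi m)| ≤ C * ξ j * ‖(x - y) + δ • (b x i - b y i)‖ ^ p := by
          have := norm_integral_le_of_norm_le_const (μ := stdGaussianPi m)
            (f := fun z => f (EMstep b σ δ (x, i) z, j) - f (EMstep b σ δ (y, i) z, j))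
            (C := C * ξ j * ‖(x - y) + δ • (b x i - b y i)‖ ^ p)
            (Filter.Eventually.of_forall fun z => by
              rw [← hdiff i x y z]
              exact hf.2 j _ _)
          simpa using this
        calc _ ≤ matExp (δ • Q) i j * (C * ξ j * ‖(x - y) + δ • (b x i - b y i)‖ ^ p) :=
              mul_le_mul_of_nonneg_left h1 (hP i j)
          _ = _ := by ring
      refine (Finset.sum_le_sum fun j _ => hj j).trans ?_
      rw [← Finset.mul_sum]
      calc _ ≤ C * (ρ * (ξ i * ‖x - y‖ ^ p)) := mul_le_mul_of_nonneg_left (hmain i x y) hC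
        _ = _ := by ring
  -- Lyapunov bound
  set G : (Fin m → ℝ) → ℝ := fun z => 1 + ∑ k, ‖EMstep b σ δ (0, k) z‖ with hG
  have hG0 : ∀ z, 0 ≤ G z := fun z =>
    add_nonneg zero_le_one (Finset.sum_nonneg fun k _ => norm_nonneg _)
  have hGint : Integrable G (stdGaussianPi m) :=
    (integrable_const _).add (integrable_finset_sum _ fun k _ => (EMstep_integrable b σ δ _).norm)
  set g : ℝ := ∫ z, G z ∂(stdGaussianPi m) with hg
  have hg0 : 0 ≤ g := integral_nonneg hG0
  have hpt : ∀ i x z, ‖EMstep b σ δ (x, i) z‖ ^ p ≤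
      ‖(x - 0) + δ • (b x i - b 0 i)‖ ^ p + G z := by
    intro i x z
    have h1 : EMstep b σ δ (x, i) z = ((x - 0) + δ • (b x i - b 0 i)) + EMstep b σ δ (0, i) z := by
      rw [← hdiff i x 0 z]; abel
    have h2 : ‖EMstep b σ δ (x, i) z‖ ≤
        ‖(x - 0) + δ • (b x i - b 0 i)‖ + ‖EMstep b σ δ (0, i) z‖ := by
      rw [h1]; exact norm_add_le _ _
    have h3 := Real.rpow_le_rpow (norm_nonneg _) h2 hp.le
    have h4 := Real.rpow_add_le_add_rpow (norm_nonneg ((x - 0) + δ • (b x i - b 0 i)))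
      (norm_nonneg (EMstep b σ δ (0, i) z)) hp.le hp1.le
    have h5 : ‖EMstep b σ δ (0, i) z‖ ^ p ≤ 1 + ‖EMstep b σ δ (0, i) z‖ := by
      have h6 := Real.rpow_le_rpow (norm_nonneg (EMstep b σ δ (0, i) z))
        (show ‖EMstep b σ δ (0, i) z‖ ≤ 1 + ‖EMstep b σ δ (0, i) z‖ by linarith) hp.le
      have h7 := Real.rpow_le_rpow_of_exponent_le
        (show 1 ≤ 1 + ‖EMstep b σ δ (0, i) z‖ by linarith [norm_nonneg (EMstep b σ δ (0, i) z)])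
        hp1.le
      rw [Real.rpow_one] at h7
      exact h6.trans h7
    have h8 : ‖EMstep b σ δ (0, i) z‖ ≤ ∑ k, ‖EMstep b σ δ (0, k) z‖ :=
      Finset.single_le_sum (f := fun k => ‖EMstep b σ δ (0, k) z‖)
        (fun k _ => norm_nonneg _) (Finset.mem_univ i)
    simp only [hG]
    linarith
  have hlyap : ∀ q, ∫⁻ y, ENNReal.ofReal (ξ y.2 * ‖y.1‖ ^ p) ∂(κ q) ≤
      ENNReal.ofReal (ρ * (ξ q.2 * ‖q.1‖ ^ p) + ξhat * g) := by
    rintro ⟨x, i⟩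
    have hFm : Measurable (fun y : EuclideanSpace ℝ (Fin n) × Fin N =>
        ENNReal.ofReal (ξ y.2 * ‖y.1‖ ^ p)) := by
      refine ENNReal.measurable_ofReal.comp (Measurable.mul ?_ ?_)
      · exact (measurable_from_top (f := ξ)).comp measurable_snd
      · exact measurable_fst.norm.pow_const p
    rw [hκ, hLint _ _ hFm]
    set d : ℝ := ‖(x - 0) + δ • (b x i - b 0 i)‖ ^ p with hd
    have hd0 : 0 ≤ d := Real.rpow_nonneg (norm_nonneg _) _
    have hj : ∀ j, ∫⁻ z, ENNReal.ofReal (ξ j * ‖EMstep b σ δ (x, i) z‖ ^ p) ∂(stdGaussianPi m)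
        ≤ ENNReal.ofReal (ξ j * (d + g)) := by
      intro j
      have hi2 : Integrable (fun z => ξ j * (d + G z)) (stdGaussianPi m) :=
        ((integrable_const d).add hGint).const_mul (ξ j)
      calc _ ≤ ∫⁻ z, ENNReal.ofReal (ξ j * (d + G z)) ∂(stdGaussianPi m) :=
            lintegral_mono fun z => ENNReal.ofReal_le_ofReal
              (mul_le_mul_of_nonneg_left (hpt i x z) (hξpos j).le)
        _ = ENNReal.ofReal (∫ z, ξ j * (d + G z) ∂(stdGaussianPi m)) := by
            rw [ofReal_integral_eq_lintegral_ofReal hi2]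
            exact Filter.Eventually.of_forall fun z =>
              mul_nonneg (hξpos j).le (add_nonneg hd0 (hG0 z))
        _ = ENNReal.ofReal (ξ j * (d + g)) := by
            rw [integral_const_mul, integral_add (integrable_const d) hGint]
            simp [hg]
    calc _ ≤ ∑ j, ENNReal.ofReal (matExp (δ • Q) i j) * ENNReal.ofReal (ξ j * (d + g)) :=
          Finset.sum_le_sum fun j _ => mul_le_mul_right (hj j) _
      _ = ENNReal.ofReal (∑ j, matExp (δ • Q) i j * (ξ j * (d + g))) := by
          rw [ENNReal.ofReal_sum_of_nonneg]
          · exact Finset.sum_congr rfl fun j _ => (ENNReal.ofReal_mul (hP i j)).symm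
          · exact fun j _ => mul_nonneg (hP i j) (mul_nonneg (hξpos j).le (add_nonneg hd0 hg0))
      _ ≤ _ := by
          refine ENNReal.ofReal_le_ofReal ?_
          have h1 := hmain i x 0
          rw [← hd] at h1
          have h2 : ∑ j, matExp (δ • Q) i j * (ξ j * g) ≤ ξhat * g := by
            calc _ ≤ ∑ j, matExp (δ • Q) i j * (ξhat * g) :=
                  Finset.sum_le_sum fun j _ => mul_le_mul_of_nonneg_left
                    (mul_le_mul_of_nonneg_right (hhi j) hg0) (hP i j)
              _ = ξhat * g := by rw [← Finset.sum_mul, hP1, one_mul]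
          have h3 : ∑ j, matExp (δ • Q) i j * (ξ j * (d + g)) =
              ∑ j, matExp (δ • Q) i j * (ξ j * d) + ∑ j, matExp (δ • Q) i j * (ξ j * g) := by
            rw [← Finset.sum_add_distrib]
            exact Finset.sum_congr rfl fun j _ => by ring
          rw [h3]
          rw [sub_zero] at h1
          exact add_le_add h1 h2
  have hfin := abstract_existsUnique hN κ (matExp (δ • Q)) hPpos hmarg μ hμpos hμsum hμP ξ hξpos
    p hp hp1 ρ hρ0 hρ1 hcontr (ξhat * g) (by positivity) hlyap
  have hiff : ∀ π : Measure (EuclideanSpace ℝ (Fin n) × Fin N),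
      IsInvariantMeasure (EMKernel Q b σ δ) π ↔ π.bind κ = π := by
    intro π
    constructor
    · intro h
      ext A hA
      rw [Measure.bind_apply hA κ.measurable.aemeasurable]
      exact h A hA
    · intro h A hA
      have h2 := Measure.bind_apply (m := π) hA κ.measurable.aemeasurable
      rw [h] at h2
      exact h2.symm
  simpa only [hiff] using hfin
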